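/- Let 1 ≤ δ < Δ be integers with δΔ even, and let h̃ : ℤ⁺ → ℝ⁺ be a positive non-increasing function. If G is a finite simple graph with minimum vertex degree δ and maximum vertex degree Δ that is minimal for J (i.e., J(G) ≤ J(Γ) for every finite simple graph Γ with minimum degree δ and maximum degree Δ), then Δ+1 ≤ |V(G)| ≤ Δ+2. -/

import Mathlib

open Finset

/-!
Since `h` is antitone and all degrees lie in `[δ, Δ]`, each vertex contributes at least `h Δ`.
Put `r = δ % 2`. A graph with minimum degree `δ` and maximum degree `Δ` has a vertex of degree `δ`
and another one of degree at most `Δ - r`: if `δ` is odd then `Δ` is even, and by the handshake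
lemma there is a second vertex of odd degree. Hence
`J(G) ≥ h δ + h (Δ - r) + (|V| - 2) h Δ`.

The bound is attained with `|V| = Δ + 2`: there is a graph with one vertex of degree `δ`, one of
degree `Δ - r`, and `Δ` of degree `Δ`, namely the complement of `compGraph δ Δ`. Comparing the two
values and cancelling `h Δ > 0` gives `|V(G)| ≤ Δ + 2`. The lower bound holds because a vertex of
degree `Δ` has `Δ` neighbours.
-/

/-- For `1 ≤ δ < Δ`, a graph on `{0, …, Δ + 1}` whose complement has degrees
`δ, Δ - δ % 2, Δ, …, Δ`.
With `m = δ + δ % 2` (an even number), vertex `0` is joined to every `j > m`, the vertices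
`1, …, m` are matched as `{1, 2}, {3, 4}, …`, and if `δ` is odd there is also the edge `{0, 1}`. -/
def compGraph (δ Δ : ℕ) : SimpleGraph (Fin (Δ + 2)) :=
  SimpleGraph.fromRel fun i j =>
    (i.val = 0 ∧ δ + δ % 2 < j.val) ∨
    (i.val % 2 = 1 ∧ j.val = i.val + 1 ∧ j.val ≤ δ + δ % 2) ∨
    (i.val = 0 ∧ j.val = 1 ∧ δ % 2 = 1)

lemma compGraph_adj (δ Δ : ℕ) (i j : Fin (Δ + 2)) : (compGraph δ Δ).Adj i j ↔
    i.val ≠ j.val ∧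
      (((i.val = 0 ∧ δ + δ % 2 < j.val) ∨
        (i.val % 2 = 1 ∧ j.val = i.val + 1 ∧ j.val ≤ δ + δ % 2) ∨
        (i.val = 0 ∧ j.val = 1 ∧ δ % 2 = 1)) ∨
       ((j.val = 0 ∧ δ + δ % 2 < i.val) ∨
        (j.val % 2 = 1 ∧ i.val = j.val + 1 ∧ i.val ≤ δ + δ % 2) ∨
        (j.val = 0 ∧ i.val = 1 ∧ δ % 2 = 1))) := by
  rw [compGraph, SimpleGraph.fromRel_adj, ne_eq, Fin.ext_iff]

open Classical in
lemma compGraph_degree_zero (δ Δ : ℕ) (hδ1 : 1 ≤ δ) (hδΔ : δ < Δ) :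
    (compGraph δ Δ).degree 0 = Δ + 1 - δ := by
  have hm : δ + δ % 2 < Δ + 2 := by omega
  have key : (compGraph δ Δ).neighborFinset 0 =
      (if δ % 2 = 1 then {(1 : Fin (Δ + 2))} else ∅) ∪ Ioi (⟨δ + δ % 2, hm⟩ : Fin (Δ + 2)) := by
    ext j
    rw [SimpleGraph.mem_neighborFinset, compGraph_adj]
    split_ifs <;> simp only [mem_union, mem_singleton, notMem_empty, mem_Ioi, Fin.lt_def,
      Fin.ext_iff, Fin.val_zero, Fin.val_one, true_and, false_or] <;> omega
  rw [← SimpleGraph.card_neighborFinset_eq_degree, key, card_union_of_disjoint, Fin.card_Ioi]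
  · split_ifs <;> simp <;> omega
  · split_ifs
    · simp [Fin.lt_def]; omega
    · simp

open Classical in
lemma compGraph_degree_one (δ Δ : ℕ) (hδ1 : 1 ≤ δ) (hδΔ : δ < Δ) :
    (compGraph δ Δ).degree 1 = 1 + δ % 2 := by
  have h2 : 2 < Δ + 2 := by omega
  have key : (compGraph δ Δ).neighborFinset 1 =
      (if δ % 2 = 1 then {(0 : Fin (Δ + 2))} else ∅) ∪ {(⟨2, h2⟩ : Fin (Δ + 2))} := by
    ext j
    rw [SimpleGraph.mem_neighborFinset, compGraph_adj]
    split_ifs <;> simp only [mem_union, mem_singleton, notMem_empty,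
      Fin.ext_iff, Fin.val_zero, Fin.val_one, true_and, false_or] <;> omega
  rw [← SimpleGraph.card_neighborFinset_eq_degree, key, card_union_of_disjoint]
  · split_ifs <;> simp <;> omega
  · split_ifs
    · simp [Fin.ext_iff]
    · simp

open Classical in
lemma compGraph_degree_other (δ Δ : ℕ) (v : Fin (Δ + 2)) (hδΔ : δ < Δ)
    (hv : 2 ≤ v.val) : (compGraph δ Δ).degree v = 1 := by
  -- The unique neighbour: `0` beyond the matched block, the matching partner inside it.
  have hw : (if δ + δ % 2 < v.val then 0 else if v.val % 2 = 1 then v.val + 1 else v.val - 1)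
      < Δ + 2 := by
    have := v.isLt
    split_ifs <;> omega
  have key : (compGraph δ Δ).neighborFinset v = {(⟨_, hw⟩ : Fin (Δ + 2))} := by
    ext j
    rw [SimpleGraph.mem_neighborFinset, compGraph_adj, mem_singleton, Fin.ext_iff]
    dsimp only
    split_ifs <;> omega
  rw [← SimpleGraph.card_neighborFinset_eq_degree, key, card_singleton]

/-- The extremal graph, with the value of `J` that the lower bound for `|V| = Δ + 2` predicts. -/
lemma exists_extremal (δ Δ : ℕ) (hδ1 : 1 ≤ δ) (hδΔ : δ < Δ) (h : ℕ → ℝ) :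
    ∃ (Γ : SimpleGraph (Fin (Δ + 2))) (_ : DecidableRel Γ.Adj),
      Γ.minDegree = δ ∧ Γ.maxDegree = Δ ∧
      ∑ w, h (Γ.degree w) = h δ + h (Δ - δ % 2) + Δ * h Δ := by
  classical
  have d0 : (compGraph δ Δ)ᶜ.degree 0 = δ := by
    rw [SimpleGraph.degree_compl, compGraph_degree_zero δ Δ hδ1 hδΔ, Fintype.card_fin]; omega
  have d1 : (compGraph δ Δ)ᶜ.degree 1 = Δ - δ % 2 := by
    rw [SimpleGraph.degree_compl, compGraph_degree_one δ Δ hδ1 hδΔ, Fintype.card_fin]; omega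
  have d2 : ∀ v : Fin (Δ + 2), 2 ≤ v.val → (compGraph δ Δ)ᶜ.degree v = Δ := by
    intro v hv
    rw [SimpleGraph.degree_compl, compGraph_degree_other δ Δ v hδΔ hv, Fintype.card_fin]
    omega
  have bounds : ∀ v, δ ≤ (compGraph δ Δ)ᶜ.degree v ∧ (compGraph δ Δ)ᶜ.degree v ≤ Δ := by
    intro v
    by_cases hv0 : v = 0
    · subst hv0; omega
    by_cases hv1 : v = 1
    · subst hv1; omega
    have := d2 v (by
      rw [Fin.ext_iff, Fin.val_zero] at hv0
      rw [Fin.ext_iff, Fin.val_one] at hv1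
      omega)
    omega
  refine ⟨(compGraph δ Δ)ᶜ, inferInstance, ?_, ?_, ?_⟩
  · apply le_antisymm
    · exact ((compGraph δ Δ)ᶜ.minDegree_le_degree 0).trans d0.le
    · exact SimpleGraph.le_minDegree_of_forall_le_degree _ _ fun v => (bounds v).1
  · apply le_antisymm
    · exact SimpleGraph.maxDegree_le_of_forall_degree_le _ _ fun v => (bounds v).2
    · exact (d2 ⟨2, by omega⟩ le_rfl).ge.trans (SimpleGraph.degree_le_maxDegree _ _)
  · rw [Fin.sum_univ_succ, Fin.sum_univ_succ, Fin.succ_zero_eq_one, d0, d1,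
      sum_congr rfl fun i _ => by rw [d2 i.succ.succ (by simp)]]
    simp [add_assoc]

/-- A second vertex of degree at most `Δ - δ % 2`; the handshake lemma is needed for `δ` odd. -/
lemma exists_second {V : Type} [Fintype V] (G : SimpleGraph V) [DecidableRel G.Adj]
    (δ Δ : ℕ) (hδ1 : 1 ≤ δ) (hpar : Even (δ * Δ)) (hmax : G.maxDegree = Δ)
    (v : V) (hv : G.degree v = δ) : ∃ w, w ≠ v ∧ G.degree w ≤ Δ - δ % 2 := by
  classical
  rcases Nat.even_or_odd δ with he | ho
  · obtain ⟨w, hw⟩ := (G.degree_pos_iff_exists_adj v).1 (by omega)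
    refine ⟨w, hw.ne', ?_⟩
    have := G.degree_le_maxDegree w
    have := Nat.even_iff.1 he
    omega
  · obtain ⟨w, hwv, hw⟩ := G.exists_ne_odd_degree_of_exists_odd_degree v (hv ▸ ho)
    refine ⟨w, hwv, ?_⟩
    have hΔ : Even Δ := (Nat.even_mul.1 hpar).resolve_left (Nat.not_even_iff_odd.2 ho)
    have := G.degree_le_maxDegree w
    have := Nat.even_iff.1 hΔ
    have := Nat.odd_iff.1 ho
    have := Nat.odd_iff.1 hw
    omega

theorem stmt_19 {V : Type} [Fintype V] (G : SimpleGraph V) [DecidableRel G.Adj]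
    (δ Δ : ℕ) (hδ1 : 1 ≤ δ) (hδΔ : δ < Δ) (hpar : Even (δ * Δ))
    (h : ℕ → ℝ) (hpos : ∀ n, 0 < h n) (hanti : Antitone h)
    (hmin : G.minDegree = δ) (hmax : G.maxDegree = Δ)
    (hminimal : ∀ (W : Type) [Fintype W] (Γ : SimpleGraph W) [DecidableRel Γ.Adj],
        Γ.minDegree = δ → Γ.maxDegree = Δ →
        ∑ u : V, h (G.degree u) ≤ ∑ w : W, h (Γ.degree w)) :
    Δ + 1 ≤ Fintype.card V ∧ Fintype.card V ≤ Δ + 2 := by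
  classical
  have hne : Nonempty V := by
    by_contra hV
    rw [not_nonempty_iff] at hV
    rw [SimpleGraph.maxDegree_of_subsingleton] at hmax
    omega
  refine ⟨hmax ▸ G.maxDegree_lt_card_verts, ?_⟩
  obtain ⟨v, hv⟩ := G.exists_minimal_degree_vertex
  rw [hmin] at hv
  obtain ⟨w, hwv, hw⟩ := exists_second G δ Δ hδ1 hpar hmax v hv.symm
  obtain ⟨Γ, _, hΓ1, hΓ2, hΓ3⟩ := exists_extremal δ Δ hδ1 hδΔ h
  have hle := hminimal _ Γ hΓ1 hΓ2
  rw [hΓ3, ← add_sum_erase _ _ (mem_univ v),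
    ← add_sum_erase (univ.erase v) _ (mem_erase.2 ⟨hwv, mem_univ w⟩), ← hv] at hle
  have hrest : (((univ.erase v).erase w).card : ℝ) * h Δ ≤
      ∑ x ∈ (univ.erase v).erase w, h (G.degree x) := by
    rw [← nsmul_eq_mul]
    exact card_nsmul_le_sum _ _ _ fun x _ => hanti (hmax ▸ G.degree_le_maxDegree x)
  have hcard : ((univ.erase v).erase w).card = Fintype.card V - 2 := by
    rw [card_erase_of_mem (mem_erase.2 ⟨hwv, mem_univ w⟩), card_erase_of_mem (mem_univ v),
      card_univ]
    omega
  have hhw := hanti hw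
  have hmul : (((univ.erase v).erase w).card : ℝ) * h Δ ≤ Δ * h Δ := by linarith
  have := le_of_mul_le_mul_right hmul (hpos Δ)
  rw [Nat.cast_le, hcard] at this
  omega
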